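/- Let n ≥ 1 and k ≥ 1. For every density matrix ρ on (ℂ^n)^{⊗k} = ℂ^{n^k}: (k−1) · S(ρ) ≤ ∑_{i=1}^k S(ρ_{{1,…,k}∖{i}}), where ρ_{{1,…,k}∖{i}} is the reduced density matrix obtained by tracing out the i-th tensor factor, and S is the von Neumann entropy with natural logarithm. -/

import Mathlib

noncomputable section

open scoped BigOperators ComplexOrder
open Matrix

/-- The von Neumann entropy (natural logarithm) `S(ρ) = −tr(ρ ln ρ)`, computed via the
eigenvalues (with the convention `0 ln 0 = 0`). -/
def entropyLn {ι : Type*} [Fintype ι] [DecidableEq ι] (ρ : Matrix ι ι ℂ) : ℝ :=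
  if h : ρ.IsHermitian then -∑ i, h.eigenvalues i * Real.log (h.eigenvalues i) else 0

/-- The reduced density matrix `ρ_A` of `ρ` on `(ℂ^n)^{⊗k}`, obtained by tracing out all
tensor factors with index outside `A`. -/
def reduced {n k : ℕ} (ρ : Matrix (Fin k → Fin n) (Fin k → Fin n) ℂ) (A : Finset (Fin k)) :
    Matrix ({ i : Fin k // i ∈ A } → Fin n) ({ i : Fin k // i ∈ A } → Fin n) ℂ :=
  fun u v => ∑ w : { i : Fin k // i ∉ A } → Fin n,
    ρ (fun i => if h : i ∈ A then u ⟨i, h⟩ else w ⟨i, h⟩)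
      (fun i => if h : i ∈ A then v ⟨i, h⟩ else w ⟨i, h⟩)


open scoped Kronecker

namespace QHan

set_option linter.unusedSectionVars false
set_option linter.unusedSimpArgs false

/-- Unitary diagonalisation data with positive eigenvalues. -/
structure Dec {ι κ : Type*} [Fintype ι] [DecidableEq ι] [Fintype κ] [DecidableEq κ]
    (ρ : Matrix ι ι ℂ) (U : Matrix ι κ ℂ) (p : κ → ℝ) : Prop where
  left : U * Uᴴ = 1
  right : Uᴴ * U = 1
  eq : ρ = U * diagonal (fun i => (p i : ℂ)) * Uᴴ
  pos : ∀ i, 0 < p i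

/-- Partial trace over the second factor. -/
def ptr {X Y : Type*} [Fintype Y] (M : Matrix (X × Y) (X × Y) ℂ) : Matrix X X ℂ :=
  fun a b => ∑ y, M (a, y) (b, y)

section entropy
variable {ι κ : Type*} [Fintype ι] [DecidableEq ι] [Fintype κ] [DecidableEq κ]

lemma entropy_of_charpoly (ρ : Matrix ι ι ℂ) (h : ρ.IsHermitian) (p : ι → ℝ)
    (hc : ρ.charpoly = ∏ i, (Polynomial.X - Polynomial.C (p i : ℂ))) :
    entropyLn ρ = -∑ i, p i * Real.log (p i) := by
  have h1 := h.roots_charpoly_eq_eigenvalues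
  rw [hc, Polynomial.roots_prod _ _ (by
    simp [Finset.prod_ne_zero_iff, Polynomial.X_sub_C_ne_zero])] at h1
  simp only [Polynomial.roots_X_sub_C, Multiset.bind_singleton] at h1
  have h2 := congrArg (fun s => (s.map (fun z : ℂ => z.re * Real.log z.re)).sum) h1
  simp only [Multiset.map_map] at h2
  rw [entropyLn, dif_pos h, neg_inj]
  simpa using h2.symm

lemma spectral (ρ : Matrix ι ι ℂ) (h : ρ.IsHermitian) :
    ∃ U : Matrix ι ι ℂ, U * Uᴴ = 1 ∧ Uᴴ * U = 1 ∧
      ρ = U * diagonal (fun i => (h.eigenvalues i : ℂ)) * Uᴴ := by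
  refine ⟨h.eigenvectorUnitary, ?_, ?_, ?_⟩
  · exact Unitary.mul_star_self_of_mem h.eigenvectorUnitary.2
  · exact Unitary.star_mul_self_of_mem h.eigenvectorUnitary.2
  · have := h.spectral_theorem
    rw [Unitary.conjStarAlgAut_apply] at this
    exact this

lemma exists_dec (ρ : Matrix ι ι ℂ) (h : ρ.PosDef) :
    ∃ (U : Matrix ι ι ℂ) (p : ι → ℝ), Dec ρ U p := by
  obtain ⟨U, h1, h2, h3⟩ := spectral ρ h.isHermitian
  exact ⟨U, _, h1, h2, h3, fun i => h.eigenvalues_pos i⟩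

lemma charpoly_diag (U : Matrix ι ι ℂ) (p : ι → ℂ) (h : Uᴴ * U = 1) :
    (U * diagonal p * Uᴴ).charpoly = ∏ i, (Polynomial.X - Polynomial.C (p i)) := by
  rw [Matrix.charpoly_mul_comm, ← mul_assoc, h, one_mul, Matrix.charpoly_diagonal]

lemma Dec.herm {ρ : Matrix ι ι ℂ} {U : Matrix ι κ ℂ} {p : κ → ℝ} (h : Dec ρ U p) :
    ρ.IsHermitian := by
  rw [h.eq, Matrix.IsHermitian]
  have hd : (diagonal (fun i => (p i : ℂ)))ᴴ = diagonal (fun i => (p i : ℂ)) := by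
    rw [diagonal_conjTranspose]
    congr 1
    ext i
    simp
  simp only [conjTranspose_mul, conjTranspose_conjTranspose, hd, Matrix.mul_assoc]

lemma Dec.entropy {ρ : Matrix ι ι ℂ} {U : Matrix ι ι ℂ} {p : ι → ℝ} (h : Dec ρ U p) :
    entropyLn ρ = -∑ i, p i * Real.log (p i) := by
  apply entropy_of_charpoly _ h.herm
  rw [h.eq, charpoly_diag _ _ h.right]

lemma entropy_submatrix (ρ : Matrix ι ι ℂ) (e : κ ≃ ι) :
    entropyLn (ρ.submatrix e e) = entropyLn ρ := by
  by_cases h : ρ.IsHermitian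
  · have h' : (ρ.submatrix e e).IsHermitian := h.submatrix e
    rw [entropy_of_charpoly _ h' (fun i => h.eigenvalues (e i))]
    · rw [entropyLn, dif_pos h, neg_inj]
      exact Equiv.sum_comp e (fun i => h.eigenvalues i * Real.log (h.eigenvalues i))
    · have : (ρ.submatrix e e) = Matrix.reindex e.symm e.symm ρ := by simp
      rw [this, Matrix.charpoly_reindex, h.charpoly_eq]
      exact (Equiv.prod_comp e (fun i => (Polynomial.X - Polynomial.C (h.eigenvalues i : ℂ)))).symm
  · have h' : ¬ (ρ.submatrix e e).IsHermitian := by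
      intro h'
      apply h
      have := h'.submatrix e.symm
      simpa using this
    rw [entropyLn, dif_neg h', entropyLn, dif_neg h]

lemma entropy_shift (ρ : Matrix ι ι ℂ) (h : ρ.IsHermitian) (t : ℝ) :
    entropyLn (ρ + (t : ℂ) • 1) = ∑ i, Real.negMulLog (h.eigenvalues i + t) := by
  obtain ⟨U, h1, h2, h3⟩ := spectral ρ h
  have hh : (ρ + (t : ℂ) • 1).IsHermitian := by
    apply h.add
    rw [Matrix.IsHermitian]
    simp
  rw [entropy_of_charpoly _ hh (fun i => h.eigenvalues i + t)]
  · simp only [Real.negMulLog, neg_mul, Finset.sum_neg_distrib]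
  · have : ρ + (t : ℂ) • 1 =
        U * diagonal (fun i => ((h.eigenvalues i + t : ℝ) : ℂ)) * Uᴴ := by
      conv_lhs => rw [h3, ← h1]
      have : diagonal (fun i => ((h.eigenvalues i + t : ℝ) : ℂ)) =
        diagonal (fun i => (h.eigenvalues i : ℂ)) + (t : ℂ) • (1 : Matrix ι ι ℂ) := by
        rw [← diagonal_one, ← diagonal_smul, diagonal_add]
        congr 1; ext i; simp
      rw [this, mul_add, add_mul]
      simp
    rw [this, charpoly_diag _ _ h2]

lemma entropy_shift_tendsto (ρ : Matrix ι ι ℂ) (h : ρ.IsHermitian) (c : ℝ) :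
    Filter.Tendsto (fun t : ℝ => entropyLn (ρ + ((t * c : ℝ) : ℂ) • 1))
      (nhdsWithin 0 (Set.Ioi 0)) (nhds (entropyLn ρ)) := by
  have h0 : entropyLn ρ = entropyLn (ρ + ((0 * c : ℝ) : ℂ) • 1) := by simp
  rw [h0]
  have : Continuous (fun t : ℝ => entropyLn (ρ + ((t * c : ℝ) : ℂ) • 1)) := by
    simp_rw [entropy_shift ρ h]
    have := Real.continuous_negMulLog
    fun_prop
  exact (this.tendsto 0).mono_left nhdsWithin_le_nhds

end entropy

section relent
variable {ι κ μ : Type*} [Fintype ι] [DecidableEq ι] [Fintype κ] [DecidableEq κ]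
  [Fintype μ] [DecidableEq μ]

/-- Quadratic quantity. -/
def Q (U : Matrix ι κ ℂ) (p : κ → ℝ) (V : Matrix ι μ ℂ) (q : μ → ℝ) (s : ℝ) : ℝ :=
  ∑ i, ∑ j, ‖(Uᴴ * V) i j‖ ^ 2 * ((1 - s) * (p i - q j) ^ 2 / ((1 - s) * q j + s * p i))

/-- Relative entropy (with linear correction). -/
def relent (U : Matrix ι κ ℂ) (p : κ → ℝ) (V : Matrix ι μ ℂ) (q : μ → ℝ) : ℝ :=
  ∑ i, ∑ j, ‖(Uᴴ * V) i j‖ ^ 2 * (p i * Real.log (p i) - p i * Real.log (q j) - p i + q j)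

lemma den_pos {a b s : ℝ} (ha : 0 < a) (hb : 0 < b) (hs : s ∈ Set.Icc (0:ℝ) 1) :
    0 < (1 - s) * b + s * a := by
  obtain ⟨h0, h1⟩ := hs
  rcases eq_or_lt_of_le h0 with h | h
  · subst h; simpa using hb
  · have := mul_pos h ha
    have := mul_nonneg (sub_nonneg.2 h1) hb.le
    linarith

lemma scalar_cont {p q : ℝ} (hp : 0 < p) (hq : 0 < q) :
    ContinuousOn (fun s => (1 - s) * (p - q) ^ 2 / ((1 - s) * q + s * p)) (Set.Icc 0 1) := by
  apply ContinuousOn.div (by fun_prop) (by fun_prop)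
  intro s hs
  exact (den_pos hp hq hs).ne'

lemma scalar_int {p q : ℝ} (hp : 0 < p) (hq : 0 < q) :
    ∫ s in (0:ℝ)..1, (1 - s) * (p - q) ^ 2 / ((1 - s) * q + s * p) =
      p * Real.log p - p * Real.log q - p + q := by
  rw [intervalIntegral.integral_eq_sub_of_hasDerivAt
    (f := fun s => p * Real.log ((1 - s) * q + s * p) - s * (p - q))]
  · simp; ring
  · intro s hs
    rw [Set.uIcc_of_le zero_le_one] at hs
    have hd := den_pos hp hq hs
    have h1 : HasDerivAt (fun s : ℝ => (1 - s) * q + s * p) (-1 * q + 1 * p) s :=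
      (((hasDerivAt_id s).const_sub 1).mul_const q).add ((hasDerivAt_id s).mul_const p)
    have h2 := ((h1.log hd.ne').const_mul p).sub ((hasDerivAt_id s).mul_const (p - q))
    refine h2.congr_deriv ?_
    have hd' := hd.ne'
    rw [eq_div_iff hd', sub_mul, mul_assoc p, div_mul_cancel₀ _ hd']
    ring
  · apply ContinuousOn.intervalIntegrable
    rw [Set.uIcc_of_le zero_le_one]
    exact scalar_cont hp hq

lemma Q_cont (U : Matrix ι κ ℂ) (p : κ → ℝ) (V : Matrix ι μ ℂ) (q : μ → ℝ)
    (hp : ∀ i, 0 < p i) (hq : ∀ j, 0 < q j) : ContinuousOn (Q U p V q) (Set.Icc 0 1) := by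
  unfold Q
  refine continuousOn_finsetSum _ fun i _ => continuousOn_finsetSum _ fun j _ => ?_
  exact continuousOn_const.mul (scalar_cont (hp i) (hq j))

lemma relent_eq (U : Matrix ι κ ℂ) (p : κ → ℝ) (V : Matrix ι μ ℂ) (q : μ → ℝ)
    (hp : ∀ i, 0 < p i) (hq : ∀ j, 0 < q j) :
    relent U p V q = ∫ s in (0:ℝ)..1, Q U p V q s := by
  have hi : ∀ i j, IntervalIntegrable (fun s => ‖(Uᴴ * V) i j‖ ^ 2 *
      ((1 - s) * (p i - q j) ^ 2 / ((1 - s) * q j + s * p i))) MeasureTheory.volume 0 1 := by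
    intro i j
    apply ContinuousOn.intervalIntegrable
    rw [Set.uIcc_of_le zero_le_one]
    exact continuousOn_const.mul (scalar_cont (hp i) (hq j))
  unfold relent Q
  rw [intervalIntegral.integral_finsetSum]
  · refine Finset.sum_congr rfl fun i _ => ?_
    rw [intervalIntegral.integral_finsetSum (fun j _ => hi i j)]
    refine Finset.sum_congr rfl fun j _ => ?_
    rw [intervalIntegral.integral_const_mul, scalar_int (hp i) (hq j)]
  · intro i _
    have := IntervalIntegrable.sum Finset.univ (fun j _ => hi i j)
    refine this.congr ?_
    intro s _
    simp

/-- Variational functional. -/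
def obj (ρ σ : Matrix ι ι ℂ) (s : ℝ) (Y : Matrix ι ι ℂ) : ℝ :=
  2 * (trace (Yᴴ * ρ)).re - 2 * (trace (Yᴴ * σ)).re - (1 - s) * (trace (Yᴴ * Y * σ)).re
    - s * (trace (Y * Yᴴ * ρ)).re

lemma trace1 (Z W : Matrix κ μ ℂ) (p : κ → ℝ) :
    (trace (Zᴴ * diagonal (fun i => (p i : ℂ)) * W)).re =
      ∑ i, ∑ j, p i * (star (Z i j) * W i j).re := by
  rw [Finset.sum_comm]
  simp only [trace, diag]
  simp_rw [mul_apply (N := W), mul_diagonal]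
  simp only [conjTranspose_apply, Complex.re_sum]
  refine Finset.sum_congr rfl fun j _ => Finset.sum_congr rfl fun i _ => ?_
  simp
  ring

lemma trace2 (Z W : Matrix κ μ ℂ) (q : μ → ℝ) :
    (trace (Zᴴ * W * diagonal (fun i => (q i : ℂ)))).re =
      ∑ i, ∑ j, q j * (star (Z i j) * W i j).re := by
  rw [Finset.sum_comm]
  simp only [trace, diag, mul_diagonal]
  simp only [mul_apply, conjTranspose_apply, Complex.re_sum, Finset.sum_mul]
  refine Finset.sum_congr rfl fun j _ => Finset.sum_congr rfl fun i _ => ?_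
  simp
  ring

lemma cancel {ν : Type*} {U : Matrix ι κ ℂ} (h : Uᴴ * U = 1) (M : Matrix κ ν ℂ) :
    Uᴴ * (U * M) = M := by
  rw [← Matrix.mul_assoc, h, Matrix.one_mul]

lemma obj_eq {ρ σ : Matrix ι ι ℂ} {U : Matrix ι κ ℂ} {p : κ → ℝ} {V : Matrix ι μ ℂ} {q : μ → ℝ}
    (hρ : Dec ρ U p) (hσ : Dec σ V q) (s : ℝ) (Z : Matrix κ μ ℂ) :
    obj ρ σ s (U * Z * Vᴴ) = ∑ i, ∑ j, (2 * (p i - q j) * (star (Z i j) * (Uᴴ * V) i j).re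
      - ((1 - s) * q j + s * p i) * ‖Z i j‖ ^ 2) := by
  have e1 : trace ((U * Z * Vᴴ)ᴴ * ρ) =
      trace (Zᴴ * diagonal (fun i => (p i : ℂ)) * (Uᴴ * V)) := by
    rw [hρ.eq]
    simp only [conjTranspose_mul, conjTranspose_conjTranspose, Matrix.mul_assoc, cancel hρ.right]
    rw [trace_mul_comm]
    simp only [Matrix.mul_assoc, cancel hρ.right]
  have e2 : trace ((U * Z * Vᴴ)ᴴ * σ) =
      trace (Zᴴ * (Uᴴ * V) * diagonal (fun i => (q i : ℂ))) := by
    rw [hσ.eq]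
    simp only [conjTranspose_mul, conjTranspose_conjTranspose, Matrix.mul_assoc]
    rw [trace_mul_comm]
    simp only [Matrix.mul_assoc, hσ.right, Matrix.mul_one, cancel hρ.right, cancel hσ.right]
  have e3 : trace ((U * Z * Vᴴ)ᴴ * (U * Z * Vᴴ) * σ) =
      trace (Zᴴ * Z * diagonal (fun i => (q i : ℂ))) := by
    rw [hσ.eq]
    simp only [conjTranspose_mul, conjTranspose_conjTranspose, Matrix.mul_assoc, cancel hρ.right, cancel hσ.right]
    rw [trace_mul_comm]
    simp only [Matrix.mul_assoc, hσ.right, Matrix.mul_one, cancel hρ.right, cancel hσ.right]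
  have e4 : trace ((U * Z * Vᴴ) * (U * Z * Vᴴ)ᴴ * ρ) =
      trace (Zᴴ * diagonal (fun i => (p i : ℂ)) * Z) := by
    rw [hρ.eq]
    simp only [conjTranspose_mul, conjTranspose_conjTranspose, Matrix.mul_assoc, cancel hρ.right, cancel hσ.right]
    rw [trace_mul_comm]
    simp only [Matrix.mul_assoc, hρ.right, Matrix.mul_one]
    rw [trace_mul_comm]
    simp only [Matrix.mul_assoc, cancel hρ.right, cancel hσ.right]
  have hz : ∀ z : ℂ, (star z * z).re = ‖z‖ ^ 2 := by
    intro z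
    rw [← Complex.normSq_eq_norm_sq, Complex.normSq_apply]
    simp
  rw [obj, e1, e2, e3, e4, trace1, trace2, trace2, trace1]
  simp only [hz, Finset.mul_sum, ← Finset.sum_sub_distrib]
  refine Finset.sum_congr rfl fun i _ => Finset.sum_congr rfl fun j _ => ?_
  ring

lemma term_le {m r : ℝ} (hm : 0 < m) (z w : ℂ) :
    2 * r * (star z * w).re - m * ‖z‖ ^ 2 ≤ ‖w‖ ^ 2 * (r ^ 2 / m) := by
  have h : ‖w‖ ^ 2 * (r ^ 2 / m) - (2 * r * (star z * w).re - m * ‖z‖ ^ 2) =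
      ‖(r : ℂ) * w - m * z‖ ^ 2 / m := by
    simp only [← Complex.normSq_eq_norm_sq, Complex.normSq_apply]
    simp
    field_simp
    ring
  have : 0 ≤ ‖(r : ℂ) * w - m * z‖ ^ 2 / m := by positivity
  linarith

lemma obj_le {ρ σ : Matrix ι ι ℂ} {U : Matrix ι κ ℂ} {p : κ → ℝ} {V : Matrix ι μ ℂ} {q : μ → ℝ}
    (hρ : Dec ρ U p) (hσ : Dec σ V q) {s : ℝ} (hs : s ∈ Set.Icc (0:ℝ) 1) (Y : Matrix ι ι ℂ) :
    (1 - s) * obj ρ σ s Y ≤ Q U p V q s := by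
  have hY : Y = U * (Uᴴ * Y * V) * Vᴴ := by
    rw [← Matrix.mul_assoc, ← Matrix.mul_assoc, hρ.left, Matrix.one_mul, Matrix.mul_assoc, hσ.left,
      Matrix.mul_one]
  rw [hY, obj_eq hρ hσ, Q]
  simp only [Finset.mul_sum]
  refine Finset.sum_le_sum fun i _ => Finset.sum_le_sum fun j _ => ?_
  have := term_le (r := p i - q j) (den_pos (hρ.pos i) (hσ.pos j) hs) ((Uᴴ * Y * V) i j)
    ((Uᴴ * V) i j)
  have h2 := mul_le_mul_of_nonneg_left this (sub_nonneg.2 hs.2)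
  refine h2.trans (le_of_eq ?_)
  ring

lemma obj_attained {ρ σ : Matrix ι ι ℂ} {U : Matrix ι κ ℂ} {p : κ → ℝ} {V : Matrix ι μ ℂ}
    {q : μ → ℝ} (hρ : Dec ρ U p) (hσ : Dec σ V q) {s : ℝ} (hs : s ∈ Set.Icc (0:ℝ) 1) :
    ∃ Y, (1 - s) * obj ρ σ s Y = Q U p V q s := by
  refine ⟨U * (Matrix.of fun i j =>
    (((p i - q j) / ((1 - s) * q j + s * p i) : ℝ) : ℂ) * (Uᴴ * V) i j) * Vᴴ, ?_⟩
  rw [obj_eq hρ hσ, Q]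
  simp only [Finset.mul_sum]
  refine Finset.sum_congr rfl fun i _ => Finset.sum_congr rfl fun j _ => ?_
  have hm := den_pos (hρ.pos i) (hσ.pos j) hs
  rw [Matrix.of_apply]
  generalize (1 - s) * q j + s * p i = m at *
  generalize (Uᴴ * V) i j = w
  simp only [ ← Complex.normSq_eq_norm_sq, Complex.normSq_apply]
  simp only [Complex.star_def, map_mul, Complex.conj_ofReal, Complex.mul_re, Complex.mul_im,
    Complex.ofReal_re, Complex.ofReal_im, Complex.conj_re, Complex.conj_im]
  field_simp
  ring

lemma trace_kron_one {X Y : Type*} [Fintype X] [DecidableEq X] [Fintype Y] [DecidableEq Y]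
    (M : Matrix X X ℂ) (ρ : Matrix (X × Y) (X × Y) ℂ) :
    trace ((M ⊗ₖ (1 : Matrix Y Y ℂ)) * ρ) = trace (M * ptr ρ) := by
  simp only [trace, diag, mul_apply, ptr, Fintype.sum_prod_type, kroneckerMap_apply, one_apply,
    mul_ite, mul_one, mul_zero, ite_mul, zero_mul, Finset.sum_ite_eq, Finset.mem_univ, if_true,
    Finset.mul_sum]
  refine Finset.sum_congr rfl fun a _ => ?_
  rw [Finset.sum_comm]

lemma obj_ptr {X Y : Type*} [Fintype X] [DecidableEq X] [Fintype Y] [DecidableEq Y]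
    (ρ σ : Matrix (X × Y) (X × Y) ℂ) (s : ℝ) (M : Matrix X X ℂ) :
    obj ρ σ s (M ⊗ₖ (1 : Matrix Y Y ℂ)) = obj (ptr ρ) (ptr σ) s M := by
  simp only [obj, conjTranspose_kronecker, ← mul_kronecker_mul, conjTranspose_one, mul_one,
    trace_kron_one]

/-- Data processing inequality for the partial trace. -/
lemma relent_mono {X Y : Type*} [Fintype X] [DecidableEq X] [Fintype Y] [DecidableEq Y]
    {κ' μ' : Type*} [Fintype κ'] [DecidableEq κ'] [Fintype μ'] [DecidableEq μ']
    {ρ σ : Matrix (X × Y) (X × Y) ℂ}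
    {U : Matrix (X × Y) κ ℂ} {p : κ → ℝ} {V : Matrix (X × Y) μ ℂ} {q : μ → ℝ}
    {U' : Matrix X κ' ℂ} {p' : κ' → ℝ} {V' : Matrix X μ' ℂ} {q' : μ' → ℝ}
    (hρ : Dec ρ U p) (hσ : Dec σ V q) (hρ' : Dec (ptr ρ) U' p') (hσ' : Dec (ptr σ) V' q') :
    relent U' p' V' q' ≤ relent U p V q := by
  rw [relent_eq _ _ _ _ hρ.pos hσ.pos, relent_eq _ _ _ _ hρ'.pos hσ'.pos]
  apply intervalIntegral.integral_mono_on zero_le_one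
  · apply ContinuousOn.intervalIntegrable
    rw [Set.uIcc_of_le zero_le_one]
    exact Q_cont _ _ _ _ hρ'.pos hσ'.pos
  · apply ContinuousOn.intervalIntegrable
    rw [Set.uIcc_of_le zero_le_one]
    exact Q_cont _ _ _ _ hρ.pos hσ.pos
  · intro s hs
    obtain ⟨M, hM⟩ := obj_attained hρ' hσ' hs
    rw [← hM, ← obj_ptr]
    exact obj_le hρ hσ hs _

lemma cross (U : Matrix ι κ ℂ) (p : κ → ℝ) (V : Matrix ι μ ℂ) (g : μ → ℝ) :
    ∑ i, ∑ j, ‖(Uᴴ * V) i j‖ ^ 2 * (p i * g j) =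
      (trace ((V * diagonal (fun j => (g j : ℂ)) * Vᴴ) *
        (U * diagonal (fun i => (p i : ℂ)) * Uᴴ))).re := by
  have e : trace ((V * diagonal (fun j => (g j : ℂ)) * Vᴴ) *
        (U * diagonal (fun i => (p i : ℂ)) * Uᴴ)) =
      trace ((Uᴴ * V)ᴴ * (diagonal (fun i => (p i : ℂ)) * (Uᴴ * V)) *
        diagonal (fun j => (g j : ℂ))) := by
    simp only [conjTranspose_mul, conjTranspose_conjTranspose]
    rw [trace_mul_comm, ← Matrix.mul_assoc, trace_mul_comm]
    simp only [Matrix.mul_assoc]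
  have hz : ∀ z : ℂ, ‖z‖ ^ 2 = (star z * z).re := by
    intro z
    rw [← Complex.normSq_eq_norm_sq, Complex.normSq_apply]
    simp
  rw [e, trace2]
  refine Finset.sum_congr rfl fun i _ => Finset.sum_congr rfl fun j _ => ?_
  rw [hz, diagonal_mul]
  simp
  ring

lemma trace_udu (U : Matrix ι κ ℂ) (hU : Uᴴ * U = 1) (f : κ → ℝ) :
    (trace (U * diagonal (fun i => (f i : ℂ)) * Uᴴ)).re = ∑ i, f i := by
  rw [trace_mul_comm, ← Matrix.mul_assoc, hU, Matrix.one_mul, trace_diagonal]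
  simp

lemma cross_left (U : Matrix ι κ ℂ) (V : Matrix ι μ ℂ) (hU : Uᴴ * U = 1) (hV : V * Vᴴ = 1)
    (f : κ → ℝ) : ∑ i, ∑ j, ‖(Uᴴ * V) i j‖ ^ 2 * f i = ∑ i, f i := by
  have h := cross U f V (fun _ => 1)
  simp only [mul_one, Complex.ofReal_one, diagonal_one, Matrix.mul_one, hV, Matrix.one_mul] at h
  rw [h, trace_udu U hU]

lemma cross_right (U : Matrix ι κ ℂ) (V : Matrix ι μ ℂ) (hU : U * Uᴴ = 1) (hV : Vᴴ * V = 1)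
    (f : μ → ℝ) : ∑ i, ∑ j, ‖(Uᴴ * V) i j‖ ^ 2 * f j = ∑ j, f j := by
  have h := cross U (fun _ => 1) V f
  simp only [one_mul, Complex.ofReal_one, diagonal_one, Matrix.mul_one, hU] at h
  rw [h, trace_udu V hV]

end relent

section ssa
variable {ι J D : Type*} [Fintype ι] [DecidableEq ι] [Fintype J] [DecidableEq J]
  [Fintype D] [DecidableEq D]

lemma kron_conj (V : Matrix J J ℂ) (f : J → ℝ) (e : ι ≃ J × D) :
    (V ⊗ₖ (1 : Matrix D D ℂ)).submatrix e id * diagonal (fun x : J × D => (f x.1 : ℂ)) *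
      ((V ⊗ₖ (1 : Matrix D D ℂ)).submatrix e id)ᴴ =
    ((V * diagonal (fun i => (f i : ℂ)) * Vᴴ) ⊗ₖ (1 : Matrix D D ℂ)).submatrix e e := by
  have h1 : diagonal (fun x : J × D => (f x.1 : ℂ)) =
      diagonal (fun i => (f i : ℂ)) ⊗ₖ (1 : Matrix D D ℂ) := by
    rw [← diagonal_one, diagonal_kronecker_diagonal]
    simp
  have h2 : (V * diagonal (fun i => (f i : ℂ)) * Vᴴ) ⊗ₖ (1 : Matrix D D ℂ) =
      (V ⊗ₖ (1 : Matrix D D ℂ)) * (diagonal (fun i => (f i : ℂ)) ⊗ₖ (1 : Matrix D D ℂ)) *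
      (V ⊗ₖ (1 : Matrix D D ℂ))ᴴ := by
    rw [conjTranspose_kronecker, ← mul_kronecker_mul, ← mul_kronecker_mul]
    simp
  rw [h1, h2]
  ext a b
  simp [Matrix.mul_apply, Matrix.submatrix_apply]

lemma Dec.kron {τ : Matrix J J ℂ} {V : Matrix J J ℂ} {q : J → ℝ} (h : Dec τ V q)
    (e : ι ≃ J × D) :
    Dec ((τ ⊗ₖ (1 : Matrix D D ℂ)).submatrix e e) ((V ⊗ₖ (1 : Matrix D D ℂ)).submatrix e id)
      (fun x => q x.1) where
  left := by
    have := kron_conj V (fun _ => 1) e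
    simpa [h.left] using this
  right := by
    have h1 : ((V ⊗ₖ (1 : Matrix D D ℂ)).submatrix e id)ᴴ * (V ⊗ₖ (1 : Matrix D D ℂ)).submatrix e id
        = (V ⊗ₖ (1 : Matrix D D ℂ))ᴴ * (V ⊗ₖ (1 : Matrix D D ℂ)) := by
      rw [conjTranspose_submatrix, Matrix.submatrix_mul_equiv, Matrix.submatrix_id_id]
    rw [h1, conjTranspose_kronecker, ← mul_kronecker_mul, h.right]
    simp
  eq := by
    rw [kron_conj, ← h.eq]
  pos x := h.pos x.1

lemma trace_submatrix_mul (A : Matrix (J × D) (J × D) ℂ) (ρ : Matrix ι ι ℂ) (e : ι ≃ J × D) :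
    trace (A.submatrix e e * ρ) = trace (A * ρ.submatrix e.symm e.symm) := by
  have : A.submatrix e e * ρ = (A * ρ.submatrix e.symm e.symm).submatrix e e := by
    rw [← Matrix.submatrix_mul_equiv _ _ e e e]
    simp
  rw [this]
  simp only [trace, diag, submatrix_apply]
  exact Equiv.sum_comp e (fun i => (A * ρ.submatrix e.symm e.symm) i i)

lemma relent_self {ρ : Matrix ι ι ℂ} {U : Matrix ι ι ℂ} {p : ι → ℝ} (hρ : Dec ρ U p)
    (e : ι ≃ J × D) {V : Matrix J J ℂ} {q : J → ℝ}
    (hτ : Dec (ptr (ρ.submatrix e.symm e.symm)) V q) :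
    relent U p ((V ⊗ₖ (1 : Matrix D D ℂ)).submatrix e id) (fun x => q x.1) =
      -entropyLn ρ + entropyLn (ptr (ρ.submatrix e.symm e.symm)) +
        ((Fintype.card D : ℝ) - 1) * (trace ρ).re := by
  have hσ := hτ.kron e
  set V' := (V ⊗ₖ (1 : Matrix D D ℂ)).submatrix e id with hV'
  set τ := ptr (ρ.submatrix e.symm e.symm) with hτdef
  have htr : trace τ = trace ρ := by
    have := trace_kron_one (1 : Matrix J J ℂ) (ρ.submatrix e.symm e.symm)
    rw [one_kronecker_one, Matrix.one_mul, Matrix.one_mul] at this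
    rw [← this]
    simp only [trace, diag, submatrix_apply]
    exact Equiv.sum_comp e.symm (fun i => ρ i i)
  have hp : (trace ρ).re = ∑ i, p i := by
    rw [hρ.eq, trace_udu U hρ.right]
  have hq : (trace ρ).re = ∑ i, q i := by
    rw [← htr, hτ.eq, trace_udu V hτ.right]
  have hc : ∑ i, ∑ j, ‖(Uᴴ * V') i j‖ ^ 2 * (p i * Real.log (q j.1)) =
      ∑ j, q j * Real.log (q j) := by
    rw [cross U p V' (fun j => Real.log (q j.1)), ← hρ.eq, hV',
      kron_conj V (fun j => Real.log (q j)) e, trace_submatrix_mul, trace_kron_one, ← hτdef,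
      hτ.eq]
    have : (V * diagonal (fun i => (Real.log (q i) : ℂ)) * Vᴴ) *
        (V * diagonal (fun i => (q i : ℂ)) * Vᴴ) =
        V * diagonal (fun i => ((q i * Real.log (q i) : ℝ) : ℂ)) * Vᴴ := by
      simp only [Matrix.mul_assoc, cancel hτ.right]
      congr 1
      rw [← Matrix.mul_assoc, diagonal_mul_diagonal]
      congr 2
      ext i
      push_cast
      ring
    rw [this, trace_udu V hτ.right]
  have h1 := cross_left U V' hρ.right hσ.left (fun i => p i * Real.log (p i))
  have h2 := cross_left U V' hρ.right hσ.left p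
  have h3 := cross_right U V' hρ.left hσ.right (fun x => q x.1)
  have h4 : ∑ x : J × D, q x.1 = Fintype.card D * ∑ j, q j := by
    rw [Fintype.sum_prod_type, Finset.mul_sum]
    simp
  rw [relent]
  simp only [mul_add, mul_sub, Finset.sum_add_distrib, Finset.sum_sub_distrib]
  rw [h1, h2, h3, hc, h4, hρ.entropy, hτ.entropy, ← hp, ← hq]
  ring

end ssa

section final
variable {B C D : Type*} [Fintype B] [DecidableEq B] [Fintype C] [DecidableEq C]
  [Fintype D] [DecidableEq D]

lemma ptr_eq_sum (M : Matrix (B × C) (B × C) ℂ) :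
    ptr M = ∑ c, M.submatrix (fun b => (b, c)) (fun b => (b, c)) := by
  ext a b
  simp [ptr, Matrix.sum_apply]

lemma ptr_posSemidef {M : Matrix (B × C) (B × C) ℂ} (h : M.PosSemidef) : (ptr M).PosSemidef := by
  rw [ptr_eq_sum]
  exact posSemidef_sum _ fun c _ => h.submatrix _

lemma ptr_posDef [Nonempty C] {M : Matrix (B × C) (B × C) ℂ} (h : M.PosDef) :
    (ptr M).PosDef := by
  rw [ptr_eq_sum]
  exact posDef_sum Finset.univ_nonempty fun c _ =>
    h.submatrix (fun a b hab => by simpa using hab)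

lemma ptr_shift (M : Matrix (B × C) (B × C) ℂ) (t : ℝ) :
    ptr (M + (t : ℂ) • 1) = ptr M + ((t * Fintype.card C : ℝ) : ℂ) • 1 := by
  ext a b
  by_cases h : a = b
  · subst h
    simp [ptr, Finset.sum_add_distrib]
    ring
  · simp [ptr, Finset.sum_add_distrib, h]

lemma trace_ptr (M : Matrix (B × C) (B × C) ℂ) : trace (ptr M) = trace M := by
  simp [trace, ptr, Fintype.sum_prod_type]

/-- The regrouping equivalence. -/
def swp : (B × D) × C ≃ (B × C) × D where
  toFun x := ((x.1.1, x.2), x.1.2)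
  invFun x := ((x.1.1, x.2), x.1.2)
  left_inv _ := rfl
  right_inv _ := rfl

lemma ssa_posDef [Nonempty C] [Nonempty D] (ρ : Matrix ((B × D) × C) ((B × D) × C) ℂ)
    (h : ρ.PosDef) :
    entropyLn ρ + entropyLn (ptr (ptr ρ)) ≤
      entropyLn (ptr ρ) + entropyLn (ptr (ρ.submatrix swp.symm swp.symm)) := by
  have hs : (ρ.submatrix (swp (B := B)).symm swp.symm).PosDef := h.submatrix (Equiv.injective _)
  obtain ⟨U, p, hU⟩ := exists_dec _ h
  obtain ⟨U', p', hU'⟩ := exists_dec _ (ptr_posDef h)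
  obtain ⟨V, q, hV⟩ := exists_dec _ (ptr_posDef hs)
  obtain ⟨V', q', hV'⟩ := exists_dec _ (ptr_posDef (ptr_posDef h))
  have h1 := relent_self hU swp hV
  have h2 := relent_self hU' (Equiv.refl (B × D)) (V := V') (q := q') (by simpa using hV')
  have e1 : ptr (((ptr (ρ.submatrix swp.symm swp.symm)) ⊗ₖ (1 : Matrix D D ℂ)).submatrix
      (swp (B := B) (C := C)) swp) =
      ((ptr (ptr ρ)) ⊗ₖ (1 : Matrix D D ℂ)).submatrix (Equiv.refl (B × D)) (Equiv.refl (B × D)) := by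
    ext ⟨b, d⟩ ⟨b', d'⟩
    simp only [ptr, submatrix_apply, kroneckerMap_apply, swp, Equiv.coe_fn_mk, Equiv.coe_fn_symm_mk,
      Equiv.refl_apply]
    rw [Finset.sum_comm (f := fun x y => ρ ((b, x), y) ((b', x), y)), Finset.sum_mul]
  have h3 := relent_mono hU (hV.kron swp) hU' (V' := ((V' ⊗ₖ (1 : Matrix D D ℂ)).submatrix
    (Equiv.refl (B × D)) id)) (q' := fun x => q' x.1) (by
      rw [e1]
      exact hV'.kron _)
  rw [h1, h2, trace_ptr] at h3
  simp only [Equiv.refl_symm, Equiv.coe_refl, submatrix_id_id] at h3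
  linarith

/-- Strong subadditivity. -/
lemma ssa [Nonempty C] [Nonempty D] (ρ : Matrix ((B × D) × C) ((B × D) × C) ℂ)
    (h : ρ.PosSemidef) :
    entropyLn ρ + entropyLn (ptr (ptr ρ)) ≤
      entropyLn (ptr ρ) + entropyLn (ptr (ρ.submatrix swp.symm swp.symm)) := by
  have hs : (ρ.submatrix (swp (B := B)).symm swp.symm).PosSemidef := h.submatrix _
  have t1 := entropy_shift_tendsto ρ h.isHermitian 1
  have t2 := entropy_shift_tendsto _ (ptr_posSemidef h).isHermitian (Fintype.card C)
  have t3 := entropy_shift_tendsto _ (ptr_posSemidef (ptr_posSemidef h)).isHermitian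
    (Fintype.card C * Fintype.card D)
  have t4 := entropy_shift_tendsto _ (ptr_posSemidef hs).isHermitian (Fintype.card D)
  refine le_of_tendsto_of_tendsto (t1.add t3) (t2.add t4) ?_
  filter_upwards [self_mem_nhdsWithin] with t ht
  have ht : 0 < t := ht
  have hpd : (ρ + (t : ℂ) • 1).PosDef := by
    apply PosDef.posSemidef_add h
    exact PosDef.smul PosDef.one (by exact_mod_cast ht)
  have := ssa_posDef _ hpd
  have e2 : (ρ + (t : ℂ) • 1).submatrix (swp (B := B)).symm swp.symm =
      ρ.submatrix (swp (B := B)).symm swp.symm + (t : ℂ) • 1 := by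
    rw [submatrix_add, submatrix_smul]
    simp
  rw [e2, ptr_shift, ptr_shift, ptr_shift] at this
  rw [mul_one, ← mul_assoc]
  exact this

end final

section han
variable {n k : ℕ}

/-- Splitting the coordinates into those of `A`, the coordinate `i`, and the rest. -/
def glue (A : Finset (Fin k)) (i : Fin k)
    (x : (({ j : Fin k // j ∈ A } → Fin n) × Fin n) × ({ j : Fin k // j ∉ insert i A } → Fin n)) :
    Fin k → Fin n :=
  fun j => if h : j ∈ A then x.1.1 ⟨j, h⟩ else
    if h' : j = i then x.1.2 else x.2 ⟨j, by simp [h, h']⟩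

def e1 (A : Finset (Fin k)) (i : Fin k) (hi : i ∉ A) :
    (({ j : Fin k // j ∈ A } → Fin n) × Fin n) × ({ j : Fin k // j ∉ insert i A } → Fin n) ≃
      (Fin k → Fin n) where
  toFun := glue A i
  invFun f := ((fun j => f j, f i), fun j => f j)
  left_inv x := by
    obtain ⟨⟨a, d⟩, c⟩ := x
    refine Prod.ext (Prod.ext ?_ ?_) ?_
    · ext ⟨j, hj⟩
      simp [glue, hj]
    · simp [glue, hi]
    · funext ⟨j, hj⟩
      have h1 : j ∉ A := fun h => hj (Finset.mem_insert_of_mem h)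
      have h2 : j ≠ i := fun h => hj (h ▸ Finset.mem_insert_self _ _)
      simp [glue, h1, h2]
  right_inv f := by
    funext j
    simp only [glue]
    split_ifs with h h'
    · rfl
    · rw [h']
    · rfl

def e2 (A : Finset (Fin k)) (i : Fin k) (hi : i ∉ A) :
    ({ j : Fin k // j ∈ A } → Fin n) × Fin n ≃ ({ j : Fin k // j ∈ insert i A } → Fin n) where
  toFun x := fun j => if h : j.1 ∈ A then x.1 ⟨j, h⟩ else x.2
  invFun f := (fun j => f ⟨j, Finset.mem_insert_of_mem j.2⟩, f ⟨i, Finset.mem_insert_self _ _⟩)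
  left_inv x := by
    refine Prod.ext ?_ ?_
    · ext ⟨j, hj⟩
      simp [hj]
    · simp [hi]
  right_inv f := by
    funext ⟨j, hj⟩
    by_cases h : j ∈ A
    · simp [h]
    · have : j = i := by simpa [h] using hj
      subst this
      simp [h]

def e3 (A : Finset (Fin k)) (i : Fin k) (hi : i ∉ A) :
    ({ j : Fin k // j ∈ A } → Fin n) × ({ j : Fin k // j ∉ insert i A } → Fin n) ≃
      ({ j : Fin k // j ∈ (Finset.univ : Finset (Fin k)) \ {i} } → Fin n) where
  toFun x := fun j => if h : j.1 ∈ A then x.1 ⟨j, h⟩ else x.2 ⟨j, by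
    have h2 : j.1 ≠ i := by
      have h3 := (Finset.mem_sdiff.1 j.2).2
      rwa [Finset.mem_singleton] at h3
    rw [Finset.mem_insert, not_or]
    exact ⟨h2, h⟩⟩
  invFun f := (fun j => f ⟨j, by
      simp only [Finset.mem_sdiff, Finset.mem_univ, Finset.mem_singleton, true_and]
      intro h
      exact hi (h ▸ j.2)⟩,
    fun j => f ⟨j, by
      simp only [Finset.mem_sdiff, Finset.mem_univ, Finset.mem_singleton, true_and]
      intro h
      exact j.2 (by rw [h]; exact Finset.mem_insert_self _ _)⟩)
  left_inv x := by
    refine Prod.ext ?_ ?_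
    · ext ⟨j, hj⟩
      simp [hj]
    · funext ⟨j, hj⟩
      have h1 : j ∉ A := fun h => hj (Finset.mem_insert_of_mem h)
      simp [h1]
  right_inv f := by
    funext ⟨j, hj⟩
    by_cases h : j ∈ A <;> simp [h]

def e4 (A : Finset (Fin k)) (i : Fin k) (hi : i ∉ A) :
    Fin n × ({ j : Fin k // j ∉ insert i A } → Fin n) ≃ ({ j : Fin k // j ∉ A } → Fin n) where
  toFun x := fun j => if h : j.1 = i then x.1 else x.2 ⟨j, by simp [h, j.2]⟩
  invFun f := (f ⟨i, hi⟩, fun j => f ⟨j, fun h => j.2 (Finset.mem_insert_of_mem h)⟩)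
  left_inv x := by
    refine Prod.ext ?_ ?_
    · simp
    · funext ⟨j, hj⟩
      have h2 : j ≠ i := fun h => hj (h ▸ Finset.mem_insert_self _ _)
      simp [h2]
  right_inv f := by
    funext ⟨j, hj⟩
    by_cases h : j = i
    · subst h; simp
    · simp [h]

/-- functions on the complement of `univ \ {i}`. -/
def e5 (i : Fin k) :
    Fin n ≃ ({ j : Fin k // j ∉ (Finset.univ : Finset (Fin k)) \ {i} } → Fin n) where
  toFun x := fun _ => x
  invFun f := f ⟨i, by simp⟩
  left_inv x := rfl
  right_inv f := by
    funext ⟨j, hj⟩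
    have : j = i := by simpa using hj
    subst this
    rfl

variable (ρ : Matrix (Fin k → Fin n) (Fin k → Fin n) ℂ)

lemma red_insert (A : Finset (Fin k)) (i : Fin k) (hi : i ∉ A) :
    ptr (ρ.submatrix (e1 A i hi) (e1 A i hi)) =
      (reduced ρ (insert i A)).submatrix (e2 A i hi) (e2 A i hi) := by
  ext ⟨a, d⟩ ⟨a', d'⟩
  simp only [ptr, submatrix_apply, reduced]
  refine Finset.sum_congr rfl fun c _ => ?_
  congr 1 <;>
  · funext j
    simp only [e1, e2, glue, Equiv.coe_fn_mk]
    by_cases h : j ∈ A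
    · simp [h]
    · by_cases h' : j = i
      · simp [h, h', hi]
      · simp [h, h']

lemma red_self (A : Finset (Fin k)) (i : Fin k) (hi : i ∉ A) :
    ptr (ptr (ρ.submatrix (e1 A i hi) (e1 A i hi))) = reduced ρ A := by
  ext a a'
  simp only [ptr, submatrix_apply, reduced]
  rw [← Fintype.sum_prod_type', ← Equiv.sum_comp (e4 A i hi)]
  refine Finset.sum_congr rfl fun c _ => ?_
  congr 1

lemma red_compl (A : Finset (Fin k)) (i : Fin k) (hi : i ∉ A) :
    ptr ((ρ.submatrix (e1 A i hi) (e1 A i hi)).submatrix swp.symm swp.symm) =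
      (reduced ρ (Finset.univ \ {i})).submatrix (e3 A i hi) (e3 A i hi) := by
  ext ⟨a, d⟩ ⟨a', d'⟩
  simp only [ptr, submatrix_apply, reduced]
  rw [← Equiv.sum_comp (e5 i)]
  refine Finset.sum_congr rfl fun c _ => ?_
  congr 1 <;>
  · funext j
    simp only [e1, e3, e5, glue, swp, Equiv.coe_fn_mk, Equiv.coe_fn_symm_mk]
    by_cases h : j ∈ A
    · have : j ≠ i := fun h' => hi (h' ▸ h)
      simp [h, this]
    · by_cases h' : j = i
      · simp [h', hi]
      · simp [h, h']

lemma ssa_red (hn : 1 ≤ n) (hρ : ρ.PosSemidef) (A : Finset (Fin k)) (i : Fin k) (hi : i ∉ A) :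
    entropyLn ρ + entropyLn (reduced ρ A) ≤
      entropyLn (reduced ρ (insert i A)) + entropyLn (reduced ρ (Finset.univ \ {i})) := by
  have : Nonempty (Fin n) := ⟨⟨0, hn⟩⟩
  have h := ssa (ρ.submatrix (e1 A i hi) (e1 A i hi)) (hρ.submatrix _)
  rw [red_self, red_insert, red_compl, entropy_submatrix, entropy_submatrix, entropy_submatrix] at h
  exact h

lemma red_univ : entropyLn (reduced ρ Finset.univ) = entropyLn ρ := by
  let e : ({ j : Fin k // j ∈ (Finset.univ : Finset (Fin k)) } → Fin n) ≃ (Fin k → Fin n) :=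
    { toFun := fun f j => f ⟨j, Finset.mem_univ j⟩
      invFun := fun f j => f j
      left_inv := fun f => rfl
      right_inv := fun f => rfl }
  have : reduced ρ Finset.univ = ρ.submatrix e e := by
    ext a b
    have : IsEmpty { j : Fin k // j ∉ (Finset.univ : Finset (Fin k)) } :=
      ⟨fun j => j.2 (Finset.mem_univ _)⟩
    simp only [reduced, Fintype.sum_unique, submatrix_apply]
    congr 1 <;>
    · funext j
      simp [e]
  rw [this, entropy_submatrix]

lemma red_empty (h : trace ρ = 1) : entropyLn (reduced ρ ∅) = 0 := by
  have h1 : reduced ρ ∅ = 1 := by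
    have : IsEmpty { j : Fin k // j ∈ (∅ : Finset (Fin k)) } :=
      ⟨fun j => Finset.notMem_empty _ j.2⟩
    let e : ({ j : Fin k // j ∉ (∅ : Finset (Fin k)) } → Fin n) ≃ (Fin k → Fin n) :=
      { toFun := fun f j => f ⟨j, by simp⟩
        invFun := fun f j => f j
        left_inv := fun f => rfl
        right_inv := fun f => rfl }
    ext a b
    rw [Subsingleton.elim a b, one_apply_eq, ← h]
    simp only [reduced, trace, diag]
    rw [← Equiv.sum_comp e]
    refine Finset.sum_congr rfl fun w _ => ?_
    congr 1
  rw [h1, entropy_of_charpoly _ isHermitian_one (fun _ => 1)]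
  · simp
  · rw [charpoly_one]
    simp

end han

end QHan

/-- for every density matrix `ρ` on `(ℂ^n)^{⊗k}`,
`(k−1) S(ρ) ≤ ∑_{i=1}^k S(ρ_{{1,…,k}∖{i}})`. -/
theorem statement18 (n k : ℕ) (hn : 1 ≤ n) (hk : 1 ≤ k)
    (ρ : Matrix (Fin k → Fin n) (Fin k → Fin n) ℂ)
    (hρ : ρ.PosSemidef) (hτ : Matrix.trace ρ = 1) :
    ((k : ℝ) - 1) * entropyLn ρ ≤
      ∑ i : Fin k, entropyLn (reduced ρ ((Finset.univ : Finset (Fin k)) \ {i})) := by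
  let A : ℕ → Finset (Fin k) := fun m => Finset.univ.filter (fun j => j.val < m)
  let G : ℕ → ℝ := fun m => entropyLn (reduced ρ (A m))
  have hG0 : G 0 = 0 := by
    have : A 0 = ∅ := by ext j; simp [A]
    simp only [G]
    rw [this]
    exact QHan.red_empty ρ hτ
  have hGk : G k = entropyLn ρ := by
    have : A k = Finset.univ := by ext j; simp [A]
    simp only [G]
    rw [this]
    exact QHan.red_univ ρ
  have hstep : ∀ i : Fin k, entropyLn ρ - (G (i.val + 1) - G i.val) ≤
      entropyLn (reduced ρ ((Finset.univ : Finset (Fin k)) \ {i})) := by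
    intro i
    have hi : i ∉ A i.val := by simp [A]
    have hA : A (i.val + 1) = insert i (A i.val) := by
      ext j
      simp only [A, Finset.mem_filter, Finset.mem_univ, true_and, Finset.mem_insert, Fin.ext_iff]
      omega
    have h := QHan.ssa_red ρ hn hρ (A i.val) i hi
    rw [← hA] at h
    simp only [G]
    linarith
  have hsum := Finset.sum_le_sum (fun i (_ : i ∈ (Finset.univ : Finset (Fin k))) => hstep i)
  rw [Finset.sum_sub_distrib, Fin.sum_univ_eq_sum_range (fun m => G (m + 1) - G m) k,
    Finset.sum_range_sub, hG0, hGk] at hsum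
  simp only [Finset.sum_const, Finset.card_univ, Fintype.card_fin, nsmul_eq_mul] at hsum
  linarith
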